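/- Let W:[0,1]²→[0,1] be a graphon whose normalized degree function g is strictly increasing and satisfies L₁|x−y| ≤ |g(x)−g(y)| for all x,y∈[0,1] and some L₁>0. Consider a sequence of collections of graphs sampled from W in which the number of graphs M is fixed and there is a network index m* with n^{(m*)} → ∞. Then max_{i∈⟦n^{(m*)}⟧} |Û^{JGS}_{i,(m*)} − U_{i,(m*)}| converges to 0 in probability. -/

import Mathlib

open MeasureTheory Set Finset
open scoped Classical

noncomputable section

/-- The uniform distribution on `[0,1]`. -/
def unif : Measure ℝ := volume.restrict (Set.Icc (0:ℝ) 1)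

instance : IsProbabilityMeasure unif := by
  constructor
  simp [unif, Real.volume_Icc]

/-- Index of a node: a graph index `m` together with a node index in graph `m`. -/
abbrev NodeIdx (M : ℕ) (n : Fin M → ℕ) := Σ m : Fin M, Fin (n m)

/-- Index of a (ordered) dyad within one graph of the collection. -/
abbrev DyadIdx (M : ℕ) (n : Fin M → ℕ) := Σ m : Fin M, Fin (n m) × Fin (n m)

/-- Sample space: latent positions for every node, and auxiliary uniform noise
for every dyad (used to generate the Bernoulli edges). -/
abbrev Sample (M : ℕ) (n : Fin M → ℕ) := (NodeIdx M n → ℝ) × (DyadIdx M n → ℝ)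

/-- The law of the collection: latent positions are i.i.d. uniform on `[0,1]`,
independent of the i.i.d. uniform dyad noises. -/
def Pmodel (M : ℕ) (n : Fin M → ℕ) : Measure (Sample M n) :=
  (Measure.pi fun _ => unif).prod (Measure.pi fun _ => unif)

variable {M : ℕ} {n : Fin M → ℕ}

/-- Latent position `U_{i,(m)}` of node `i` of graph `m`. -/
def Upos (m : Fin M) (i : Fin (n m)) (ω : Sample M n) : ℝ := ω.1 ⟨m, i⟩

/-- Adjacency variable `A^{(m)}_{i,j}`: given the latent positions, edges are
independent Bernoulli variables with success probability `W(U_i,U_j)`,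
realized by thresholding the uniform dyad noise; `A_{ii} = 0` and `A` symmetric. -/
def Aedge (W : ℝ → ℝ → ℝ) (m : Fin M) (i j : Fin (n m)) (ω : Sample M n) : ℝ :=
  if i = j then 0
  else if ω.2 ⟨m, (min i j, max i j)⟩ ≤ W (Upos m i ω) (Upos m j ω) then 1 else 0

/-- Normalized empirical degree `d̂_{i,(m)} = (1/(n^{(m)}-1)) ∑_j A^{(m)}_{i,j}`. -/
def dhat (W : ℝ → ℝ → ℝ) (m : Fin M) (i : Fin (n m)) (ω : Sample M n) : ℝ :=
  (∑ j, Aedge W m i j ω) / ((n m : ℝ) - 1)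

/-- Total number of nodes `N = ∑_m n^{(m)}`. -/
def Ntot (M : ℕ) (n : Fin M → ℕ) : ℕ := ∑ m, n m

/-- Normalized degree function `g(u) = ∫₀¹ W(u,v) dv`. -/
def gdeg (W : ℝ → ℝ → ℝ) (u : ℝ) : ℝ := ∫ v in Set.Icc (0:ℝ) 1, W u v

/-- Empirical rank `r̂_{i,(m)}` of node `(i,m)` among all `N` nodes of the
collection sorted by increasing normalized empirical degree. -/
def rhat (W : ℝ → ℝ → ℝ) (m : Fin M) (i : Fin (n m)) (ω : Sample M n) : ℕ :=
  (Finset.univ.filter fun p : NodeIdx M n => dhat W p.1 p.2 ω ≤ dhat W m i ω).card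

/-- JGS latent position estimator `Û^{JGS}_{i,(m)} = r̂_{i,(m)}/N - 1/(2N)`. -/
def Uhat (W : ℝ → ℝ → ℝ) (m : Fin M) (i : Fin (n m)) (ω : Sample M n) : ℝ :=
  (rhat W m i ω : ℝ) / (Ntot M n : ℝ) - 1 / (2 * (Ntot M n : ℝ))

/-!
Conditionally on its own latent position `u`, the degree of a node is a sum of i.i.d. Bernoulli
variables of mean `g(u)`, so Hoeffding's inequality and a union bound put the normalized degrees
of all nodes of graphs of size at least `k₀` uniformly close to their values of `g`. A strictly
increasing function on `[0,1]` satisfies a uniform separation: positions at distance at least `η`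
have values of `g` at distance at least some `γ > 0`. Hence the degrees order the latent positions
correctly up to resolution `η`, except at the nodes of graphs of size less than `k₀`. There are at
most `M * k₀` of these, a vanishing fraction of the `N` nodes, so the normalized rank of a node is
close to the empirical distribution function of the latent positions at its own position, which is
close to that position by the Glivenko–Cantelli theorem.
-/

section Hoeffding

open ProbabilityTheory

variable {Ω α ι : Type*} [MeasurableSpace Ω] [MeasurableSpace α] [Fintype ι]
  {μ : Measure Ω} [IsProbabilityMeasure μ] {a b δ : ℝ}

lemma measureReal_sum_sub_integral_ge_le {X : ι → Ω → ℝ} (hX : iIndepFun X μ)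
    (hm : ∀ i, AEMeasurable (X i) μ) (hab : ∀ i, ∀ᵐ ω ∂μ, X i ω ∈ Set.Icc a b) (hδ : 0 ≤ δ) :
    μ.real {ω | Fintype.card ι * δ ≤ ∑ i, (X i ω - ∫ ω', X i ω' ∂μ)} ≤
      Real.exp (-(2 * Fintype.card ι * δ ^ 2 / (b - a) ^ 2)) := by
  have hindep : iIndepFun (fun i ω => X i ω - ∫ ω', X i ω' ∂μ) μ :=
    hX.comp (fun i x => x - ∫ ω', X i ω' ∂μ) fun _ => by fun_prop
  refine (HasSubgaussianMGF.measure_sum_ge_le_of_iIndepFun hindep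
    (fun i _ => hasSubgaussianMGF_of_mem_Icc (hm i) (hab i)) (by positivity)).trans
    (Real.exp_le_exp.2 (le_of_eq ?_))
  have hvar : ((∑ _i : ι, (‖b - a‖₊ / 2) ^ 2 : NNReal) : ℝ) =
      Fintype.card ι * ((b - a) ^ 2 / 4) := by
    simp only [sum_const, card_univ, nsmul_eq_mul, NNReal.coe_mul, NNReal.coe_natCast,
      NNReal.coe_pow, NNReal.coe_div, coe_nnnorm, Real.norm_eq_abs, div_pow, sq_abs,
      NNReal.coe_ofNat]
    norm_num
  rw [hvar]
  rcases eq_or_ne (Fintype.card ι : ℝ) 0 with hcard | hcard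
  · simp [hcard]
  rcases eq_or_ne (b - a) 0 with hba | hba
  · simp [hba]
  field_simp
  norm_num

theorem measure_abs_sum_sub_integral_ge_le {X : ι → Ω → ℝ} (hX : iIndepFun X μ)
    (hm : ∀ i, AEMeasurable (X i) μ) (hab : ∀ i, ∀ᵐ ω ∂μ, X i ω ∈ Set.Icc a b) (hδ : 0 ≤ δ) :
    μ {ω | Fintype.card ι * δ ≤ |∑ i, (X i ω - ∫ ω', X i ω' ∂μ)|} ≤
      ENNReal.ofReal (2 * Real.exp (-(2 * Fintype.card ι * δ ^ 2 / (b - a) ^ 2))) := by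
  have hupper := measureReal_sum_sub_integral_ge_le hX hm hab hδ
  have hlower := measureReal_sum_sub_integral_ge_le (X := fun i ω => -X i ω)
    (hX.comp (fun _ x => -x) fun _ => measurable_neg) (fun i => (hm i).neg)
    (fun i => (hab i).mono fun _ h => ⟨neg_le_neg h.2, neg_le_neg h.1⟩) hδ
  rw [neg_sub_neg] at hlower
  rw [← ofReal_measureReal, two_mul]
  refine ENNReal.ofReal_le_ofReal (le_trans (measureReal_mono ?_)
    ((measureReal_union_le _ _).trans (add_le_add hupper hlower)))
  intro ω hω
  simp only [Set.mem_ofPred_eq, Set.mem_union] at hω ⊢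
  refine (le_abs.1 hω).imp_right fun h => h.trans_eq ?_
  rw [← Finset.sum_neg_distrib]
  exact Finset.sum_congr rfl fun i _ => by rw [integral_neg]; ring

theorem pi_abs_average_sub_integral_ge_le {ν : Measure α} [IsProbabilityMeasure ν] {f : α → ℝ}
    (hf : Measurable f) (hab : ∀ x, f x ∈ Set.Icc a b) (hδ : 0 ≤ δ) :
    (Measure.pi fun _ : ι => ν)
        {x | δ ≤ |(∑ i, f (x i)) / Fintype.card ι - ∫ y, f y ∂ν|} ≤
      ENNReal.ofReal (2 * Real.exp (-(2 * Fintype.card ι * δ ^ 2 / (b - a) ^ 2))) := by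
  refine (measure_mono fun x hx => ?_).trans
    (measure_abs_sum_sub_integral_ge_le (μ := Measure.pi fun _ : ι => ν)
      (X := fun i x => f (x i)) (iIndepFun_pi (X := fun _ => f) fun _ => hf.aemeasurable)
      (fun i => (hf.comp (measurable_pi_apply i)).aemeasurable)
      (fun i => .of_forall fun x => hab (x i)) hδ)
  have hmean (i : ι) : ∫ x, f (x i) ∂(Measure.pi fun _ : ι => ν) = ∫ y, f y ∂ν :=
    integral_comp_eval (μ := fun _ => ν) hf.aestronglyMeasurable
  simp only [Set.mem_ofPred_eq, hmean, Finset.sum_sub_distrib, Finset.sum_const, card_univ,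
    nsmul_eq_mul] at hx ⊢
  rcases eq_or_ne (Fintype.card ι : ℝ) 0 with hcard | hcard
  · simp [hcard]
  calc Fintype.card ι * δ
      ≤ Fintype.card ι * |(∑ i, f (x i)) / Fintype.card ι - ∫ y, f y ∂ν| := by gcongr
    _ = |∑ i, f (x i) - Fintype.card ι * ∫ y, f y ∂ν| := by
      rw [← Nat.abs_cast, ← abs_mul, Nat.abs_cast, mul_sub, mul_div_cancel₀ _ hcard]

theorem prod_pi_abs_average_sub_integral_ge_le {ν : Measure α} [IsProbabilityMeasure ν]
    {f : Ω × α → ℝ} (hf : Measurable f) (hab : ∀ z, f z ∈ Set.Icc a b) (hδ : 0 ≤ δ) :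
    (μ.prod (Measure.pi fun _ : ι => ν))
        {z | δ ≤ |(∑ i, f (z.1, z.2 i)) / Fintype.card ι - ∫ y, f (z.1, y) ∂ν|} ≤
      ENNReal.ofReal (2 * Real.exp (-(2 * Fintype.card ι * δ ^ 2 / (b - a) ^ 2))) := by
  have hmean : Measurable fun ω => ∫ y, f (ω, y) ∂ν :=
    hf.stronglyMeasurable.integral_prod_right'.measurable
  have hsum : Measurable fun z : Ω × (ι → α) => ∑ i, f (z.1, z.2 i) := by fun_prop
  have hdev : Measurable fun z : Ω × (ι → α) =>
      |(∑ i, f (z.1, z.2 i)) / Fintype.card ι - ∫ y, f (z.1, y) ∂ν| :=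
    ((hsum.div_const _).sub (hmean.comp measurable_fst)).abs
  rw [Measure.prod_apply (measurableSet_le measurable_const hdev)]
  calc _ ≤ ∫⁻ _, ENNReal.ofReal
        (2 * Real.exp (-(2 * Fintype.card ι * δ ^ 2 / (b - a) ^ 2))) ∂μ :=
        lintegral_mono fun ω => pi_abs_average_sub_integral_ge_le
          (hf.comp measurable_prodMk_left) (fun y => hab (ω, y)) hδ
    _ = _ := by simp

end Hoeffding

section ProductMeasure

open ProbabilityTheory

theorem measurePreserving_pi_comp_injective {ι κ : Type*} [Fintype ι] [Fintype κ]
    {X : κ → Type*} [∀ k, MeasurableSpace (X k)] (μ : ∀ k, Measure (X k))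
    [∀ k, IsProbabilityMeasure (μ k)] {e : ι → κ} (he : Function.Injective e) :
    MeasurePreserving (fun (x : ∀ k, X k) i => x (e i)) (Measure.pi μ)
      (Measure.pi fun i => μ (e i)) := by
  refine ⟨by fun_prop, ?_⟩
  have hindep : iIndepFun (fun k (x : ∀ k, X k) => x k) (Measure.pi μ) :=
    iIndepFun_pi (X := fun _ x => x) fun _ => aemeasurable_id
  rw [(hindep.precomp he).map_fun_eq_pi_map fun i => (measurable_pi_apply (e i)).aemeasurable]
  exact congrArg Measure.pi (funext fun i => (measurePreserving_eval μ (e i)).map_eq)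

theorem measurePreserving_eval_prodMk_comp {α ι κ : Type*} [MeasurableSpace α] [Fintype ι]
    [Fintype κ] (μ : κ → Measure α) [∀ k, IsProbabilityMeasure (μ k)] {k : κ} {e : ι → κ}
    (he : Function.Injective e) (hk : k ∉ Set.range e) :
    MeasurePreserving (fun x : κ → α => (x k, fun i => x (e i))) (Measure.pi μ)
      ((μ k).prod (Measure.pi fun i => μ (e i))) := by
  have hinj : Function.Injective (Sum.elim (fun _ : Unit => k) e) :=
    Function.Injective.sumElim (Function.injective_of_subsingleton _) he
      fun _ i h => hk ⟨i, h.symm⟩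
  exact (((measurePreserving_piUnique _).prod (MeasurePreserving.id _)).comp
    (measurePreserving_sumPiEquivProdPi _)).comp (measurePreserving_pi_comp_injective μ hinj)

end ProductMeasure

section MonotoneFunctions

lemma exists_pos_add_le_of_strictMonoOn {f : ℝ → ℝ} {a b η : ℝ}
    (hf : StrictMonoOn f (Set.Icc a b)) (hη : 0 < η) :
    ∃ γ > 0, ∀ x ∈ Set.Icc a b, ∀ y ∈ Set.Icc a b, x + η ≤ y → f x + γ ≤ f y := by
  refine isCompact_Icc.induction_on (s := Set.Icc a b)
    (p := fun s => ∃ γ > 0, ∀ x ∈ s, ∀ y ∈ Set.Icc a b, x + η ≤ y → f x + γ ≤ f y)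
    ⟨1, one_pos, by simp⟩ ?mono ?union ?nhds
  case mono => exact fun s t hst ⟨γ, hγ, ht⟩ => ⟨γ, hγ, fun x hx => ht x (hst hx)⟩
  case union =>
    rintro s t ⟨γ₁, hγ₁, hs⟩ ⟨γ₂, hγ₂, ht⟩
    refine ⟨min γ₁ γ₂, lt_min hγ₁ hγ₂, ?_⟩
    rintro x (hx | hx) y hy hxy
    · linarith [hs x hx y hy hxy, min_le_left γ₁ γ₂]
    · linarith [ht x hx y hy hxy, min_le_right γ₁ γ₂]
  case nhds =>
    -- Near `x₀`, every admissible pair `x`, `y` straddles `x₀ + η / 3 < x₀ + 2 * η / 3`.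
    intro x₀ hx₀
    refine ⟨Set.Icc a b ∩ Set.Ioo (x₀ - η / 3) (x₀ + η / 3), inter_mem_nhdsWithin _
      (Ioo_mem_nhds (by linarith) (by linarith)), ?_⟩
    rcases lt_or_ge b (x₀ + 2 * η / 3) with hb | hb
    · refine ⟨1, one_pos, fun x hx y hy hxy => ?_⟩
      linarith [hx.2.1, hy.2]
    have hu : x₀ + η / 3 ∈ Set.Icc a b := ⟨by linarith [hx₀.1], by linarith⟩
    have hv : x₀ + 2 * η / 3 ∈ Set.Icc a b := ⟨by linarith [hx₀.1], hb⟩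
    refine ⟨f (x₀ + 2 * η / 3) - f (x₀ + η / 3), sub_pos.2 (hf hu hv (by linarith)), ?_⟩
    intro x hx y hy hxy
    have hxu : f x ≤ f (x₀ + η / 3) := hf.monotoneOn hx.1 hu hx.2.2.le
    have hvy : f (x₀ + 2 * η / 3) ≤ f y := hf.monotoneOn hv hy (by linarith [hx.2.1])
    linarith

lemma abs_sub_self_lt_of_monotoneOn_of_grid {F : ℝ → ℝ} (hF : MonotoneOn F (Set.Icc 0 1))
    {K : ℕ} (hK : 0 < K) {δ : ℝ} (hgrid : ∀ k ≤ K, |F (k / K) - k / K| < δ)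
    {y : ℝ} (hy : y ∈ Set.Icc (0 : ℝ) 1) : |F y - y| < δ + 1 / K := by
  have hKpos : (0 : ℝ) < K := by exact_mod_cast hK
  have hgrid_mem {k : ℕ} (hk : k ≤ K) : (k / K : ℝ) ∈ Set.Icc (0 : ℝ) 1 :=
    ⟨by positivity, div_le_one_of_le₀ (by exact_mod_cast hk) hKpos.le⟩
  have hyK : 0 ≤ y * K := mul_nonneg hy.1 hKpos.le
  have hyK' : y * K ≤ K := mul_le_of_le_one_left hKpos.le hy.2
  rw [abs_lt]
  constructor
  · have hk : ⌊y * K⌋₊ ≤ K := Nat.floor_le_of_le hyK'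
    have hle : (⌊y * K⌋₊ / K : ℝ) ≤ y := (div_le_iff₀ hKpos).2 (Nat.floor_le hyK)
    have hge : y - 1 / K ≤ ⌊y * K⌋₊ / K := by
      rw [le_div_iff₀ hKpos, sub_mul, one_div_mul_cancel hKpos.ne']
      exact (Nat.sub_one_lt_floor _).le
    linarith [hF (hgrid_mem hk) hy hle, (abs_lt.1 (hgrid _ hk)).1]
  · have hk : ⌈y * K⌉₊ ≤ K := Nat.ceil_le.2 hyK'
    have hge : y ≤ ⌈y * K⌉₊ / K := (le_div_iff₀ hKpos).2 (Nat.le_ceil _)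
    have hle : (⌈y * K⌉₊ / K : ℝ) ≤ y + 1 / K := by
      rw [div_le_iff₀ hKpos, add_mul, one_div_mul_cancel hKpos.ne']
      exact (Nat.ceil_lt_add_one hyK).le
    linarith [hF hy (hgrid_mem hk) hge, (abs_lt.1 (hgrid _ hk)).2]

end MonotoneFunctions

section EmpiricalCDF

variable {ι : Type*} [Fintype ι]

/-- The empirical distribution function of the finite sample `x`, evaluated at `y`; it is `0` when
the sample is empty. The normalized rank of the value `x i` in the sample is
`empiricalCDF x (x i)`. -/
def empiricalCDF (x : ι → ℝ) (y : ℝ) : ℝ :=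
  (Finset.univ.filter fun i => x i ≤ y).card / (Fintype.card ι : ℝ)

lemma empiricalCDF_nonneg (x : ι → ℝ) (y : ℝ) : 0 ≤ empiricalCDF x y := by
  unfold empiricalCDF; positivity

lemma empiricalCDF_mono (x : ι → ℝ) : Monotone (empiricalCDF x) := fun _ _ hab =>
  div_le_div_of_nonneg_right (Nat.cast_le.2 (Finset.card_le_card
    (Finset.monotone_filter_right _ fun _ _ hi => le_trans hi hab))) (Nat.cast_nonneg _)

lemma empiricalCDF_eq_average (x : ι → ℝ) (y : ℝ) :
    empiricalCDF x y = (∑ i, (Set.Iic y).indicator 1 (x i)) / Fintype.card ι := by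
  simp [empiricalCDF, Set.indicator_apply]

lemma empiricalCDF_le_add {x d : ι → ℝ} {a b : ℝ} {s : Finset ι}
    (h : ∀ i ∉ s, x i ≤ a → d i ≤ b) :
    empiricalCDF x a ≤ s.card / Fintype.card ι + empiricalCDF d b := by
  have hsub : (Finset.univ.filter fun i => x i ≤ a) ⊆
      s ∪ Finset.univ.filter fun i => d i ≤ b := fun i hi => by
    by_cases hs : i ∈ s
    · exact Finset.mem_union_left _ hs
    · simpa [hs] using h i hs (Finset.mem_filter.1 hi).2
  rw [empiricalCDF, empiricalCDF, ← add_div]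
  gcongr
  exact_mod_cast (Finset.card_le_card hsub).trans (Finset.card_union_le _ _)

theorem abs_empiricalCDF_apply_self_sub_lt {x d : ι → ℝ} {s : Finset ι} {η : ℝ}
    (hx : ∀ i, x i ∈ Set.Icc (0 : ℝ) 1) (hs : (s.card : ℝ) / Fintype.card ι ≤ η)
    (hcdf : ∀ y ∈ Set.Icc (0 : ℝ) 1, |empiricalCDF x y - y| < η)
    (hsep : ∀ i ∉ s, ∀ j ∉ s, x i + η ≤ x j → d i < d j) {i : ι} (hi : i ∉ s) :
    |empiricalCDF d (d i) - x i| < 3 * η := by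
  have hη : 0 ≤ η := le_trans (by positivity) hs
  rw [abs_lt]
  constructor
  · rcases lt_or_ge (x i) η with hxi | hxi
    · linarith [empiricalCDF_nonneg d (d i)]
    have hle := empiricalCDF_le_add (d := d) (b := d i) fun j (hj : j ∉ s) (hji : x j ≤ x i - η) =>
      (hsep j hj i hi (by linarith)).le
    linarith [(abs_lt.1 (hcdf (x i - η) ⟨by linarith, by linarith [(hx i).2]⟩)).1]
  · have hle := empiricalCDF_le_add (d := x) (b := min 1 (x i + η))
      fun j (hj : j ∉ s) (hji : d j ≤ d i) =>
        le_min (hx j).2 (le_of_not_ge fun h => hji.not_gt (hsep i hi j hj h))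
    have hmem : min 1 (x i + η) ∈ Set.Icc (0 : ℝ) 1 :=
      ⟨le_min zero_le_one (by linarith [(hx i).1]), min_le_left _ _⟩
    linarith [(abs_lt.1 (hcdf _ hmem)).2, min_le_right 1 (x i + η)]

end EmpiricalCDF

section UniformLaw

lemma ae_unif_mem_Icc : ∀ᵐ u ∂unif, u ∈ Set.Icc (0 : ℝ) 1 := ae_restrict_mem measurableSet_Icc

lemma unif_real_Iic {y : ℝ} (hy : y ∈ Set.Icc (0 : ℝ) 1) : unif.real (Set.Iic y) = y := by
  have hset : Set.Iic y ∩ Set.Icc 0 1 = Set.Icc 0 y := by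
    ext u
    exact ⟨fun h => ⟨h.2.1, h.1⟩, fun h => ⟨h.2, h.1, h.2.trans hy.2⟩⟩
  rw [unif, measureReal_restrict_apply measurableSet_Iic, hset]
  simp [measureReal_def, hy.1]

variable {ι : Type*} [Fintype ι] {δ : ℝ}

lemma pi_unif_abs_empiricalCDF_sub_ge_le (hδ : 0 ≤ δ) {y : ℝ} (hy : y ∈ Set.Icc (0 : ℝ) 1) :
    (Measure.pi fun _ : ι => unif) {x | δ ≤ |empiricalCDF x y - y|} ≤
      ENNReal.ofReal (2 * Real.exp (-(2 * Fintype.card ι * δ ^ 2))) := by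
  have hoeffding := pi_abs_average_sub_integral_ge_le (ι := ι) (ν := unif) (a := 0) (b := 1)
    (measurable_const.indicator (f := 1) measurableSet_Iic)
    (fun u => ⟨Set.indicator_nonneg (s := Set.Iic y) (fun _ _ => zero_le_one) u,
      Set.indicator_le_self' (s := Set.Iic y) (fun _ _ => zero_le_one) u⟩) hδ
  simpa only [← empiricalCDF_eq_average, integral_indicator_one measurableSet_Iic,
    unif_real_Iic hy, sub_zero, one_pow, div_one] using hoeffding

/-- A quantitative Glivenko–Cantelli bound: both distribution functions are monotone, so a union
bound over the grid of mesh `1 / K` suffices. -/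
theorem pi_unif_exists_abs_empiricalCDF_sub_ge_le (hδ : 0 ≤ δ) {K : ℕ} (hK : 0 < K) :
    (Measure.pi fun _ : ι => unif)
        {x | ∃ y ∈ Set.Icc (0 : ℝ) 1, δ + 1 / K ≤ |empiricalCDF x y - y|} ≤
      (K + 1) * ENNReal.ofReal (2 * Real.exp (-(2 * Fintype.card ι * δ ^ 2))) := by
  have hgrid : {x : ι → ℝ | ∃ y ∈ Set.Icc (0 : ℝ) 1, δ + 1 / K ≤ |empiricalCDF x y - y|} ⊆
      ⋃ k ∈ Finset.range (K + 1), {x | δ ≤ |empiricalCDF x (k / K) - k / K|} := by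
    rintro x ⟨y, hy, hxy⟩
    by_contra hx
    simp only [Set.mem_iUnion, Set.mem_ofPred_eq, Finset.mem_range_succ_iff, not_exists,
      not_le] at hx
    exact hxy.not_gt (abs_sub_self_lt_of_monotoneOn_of_grid
      ((empiricalCDF_mono x).monotoneOn _) hK hx hy)
  calc _ ≤ ∑ k ∈ Finset.range (K + 1), (Measure.pi fun _ : ι => unif)
          {x | δ ≤ |empiricalCDF x (k / K) - k / K|} :=
        (measure_mono hgrid).trans (measure_biUnion_finset_le _ _)
    _ ≤ (Finset.range (K + 1)).card •
          ENNReal.ofReal (2 * Real.exp (-(2 * Fintype.card ι * δ ^ 2))) :=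
        Finset.sum_le_card_nsmul _ _ _ fun k hk => pi_unif_abs_empiricalCDF_sub_ge_le hδ
          ⟨by positivity, div_le_one_of_le₀
            (by exact_mod_cast Finset.mem_range_succ_iff.1 hk) K.cast_nonneg⟩
    _ = _ := by rw [Finset.card_range, nsmul_eq_mul]; push_cast; rfl

end UniformLaw

section ExponentialTails

lemma tendsto_exp_neg_mul_natCast {c : ℝ} (hc : 0 < c) :
    Filter.Tendsto (fun k : ℕ => Real.exp (-(c * k))) Filter.atTop (nhds 0) :=
  Real.tendsto_exp_neg_atTop_nhds_zero.comp
    (tendsto_natCast_atTop_atTop.const_mul_atTop hc)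

lemma tendsto_natCast_mul_exp_neg_mul_natCast {c : ℝ} (hc : 0 < c) :
    Filter.Tendsto (fun k : ℕ => k * Real.exp (-(c * k))) Filter.atTop (nhds 0) := by
  refine (tendsto_self_mul_const_pow_of_lt_one (Real.exp_pos (-c)).le
    (Real.exp_lt_one_iff.2 (neg_lt_zero.2 hc))).congr fun k => ?_
  rw [← Real.exp_nat_mul, mul_neg, mul_comm c]

lemma tendsto_natCast_mul_ofReal_exp_neg {c : ℝ} (hc : 0 < c) :
    Filter.Tendsto (fun k : ℕ => k * ENNReal.ofReal (2 * Real.exp (-(c * (k - 1)))))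
      Filter.atTop (nhds 0) := by
  have hlim := (tendsto_natCast_mul_exp_neg_mul_natCast hc).const_mul (2 * Real.exp c)
  rw [mul_zero] at hlim
  refine (ENNReal.ofReal_zero ▸ ENNReal.tendsto_ofReal hlim).congr fun k => ?_
  rw [← ENNReal.ofReal_natCast, ← ENNReal.ofReal_mul k.cast_nonneg,
    show -(c * ((k : ℝ) - 1)) = c + -(c * k) by ring, Real.exp_add]
  congr 1
  ring

end ExponentialTails

section Degrees

variable {W : ℝ → ℝ → ℝ} {δ : ℝ}

/-- The edge variable of a node at position `z.1` and a node at position `z.2.1` joined by a dyad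
with noise `z.2.2`. -/
def thresholdEdge (W : ℝ → ℝ → ℝ) (z : ℝ × ℝ × ℝ) : ℝ :=
  if z.2.2 ≤ W z.1 z.2.1 then 1 else 0

/-- All that the degree of node `i` of graph `m` depends on: its own latent position, and the
latent position and the dyad noise of every other node of that graph. -/
def egoView (m : Fin M) (i : Fin (n m)) (ω : Sample M n) : ℝ × ({j // j ≠ i} → ℝ × ℝ) :=
  (Upos m i ω, fun j => (Upos m j ω, ω.2 ⟨m, (min i j, max i j)⟩))

lemma measurable_thresholdEdge (hW : Measurable (Function.uncurry W)) :
    Measurable (thresholdEdge W) := by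
  have hpos : Measurable fun z : ℝ × ℝ × ℝ => (z.1, z.2.1) := by fun_prop
  exact Measurable.ite (measurableSet_le (by fun_prop) (hW.comp hpos))
    measurable_const measurable_const

lemma thresholdEdge_mem_Icc (z : ℝ × ℝ × ℝ) : thresholdEdge W z ∈ Set.Icc (0 : ℝ) 1 := by
  unfold thresholdEdge; split_ifs <;> simp

lemma integral_thresholdEdge (hW : Measurable (Function.uncurry W)) {u : ℝ}
    (hu : ∀ v ∈ Set.Icc (0 : ℝ) 1, W u v ∈ Set.Icc (0 : ℝ) 1) :
    ∫ y, thresholdEdge W (u, y) ∂(unif.prod unif) = gdeg W u := by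
  have hint : Integrable (fun y => thresholdEdge W (u, y)) (unif.prod unif) :=
    .of_mem_Icc 0 1 ((measurable_thresholdEdge hW).comp measurable_prodMk_left).aemeasurable
      (.of_forall fun y => thresholdEdge_mem_Icc (u, y))
  have hind (v : ℝ) : (fun ξ => thresholdEdge W (u, v, ξ)) = (Set.Iic (W u v)).indicator 1 := by
    ext ξ; simp [thresholdEdge, Set.indicator_apply]
  rw [integral_prod _ hint]
  refine setIntegral_congr_fun measurableSet_Icc fun v hv => ?_
  simp only [hind]
  rw [integral_indicator_one measurableSet_Iic, unif_real_Iic (hu v hv)]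

lemma card_ne_node (m : Fin M) (i : Fin (n m)) :
    (Fintype.card {j // j ≠ i} : ℝ) = n m - 1 := by
  have := i.pos
  simp [Fintype.card_subtype_compl, Nat.cast_sub (show 1 ≤ n m from this)]

lemma dhat_eq_average_thresholdEdge (m : Fin M) (i : Fin (n m)) (ω : Sample M n) :
    dhat W m i ω = (∑ j, thresholdEdge W ((egoView m i ω).1, (egoView m i ω).2 j)) /
      Fintype.card {j // j ≠ i} := by
  have hself : Aedge W m i i ω = 0 := if_pos rfl
  have hother (j : {j // j ≠ i}) :
      Aedge W m i j ω = thresholdEdge W ((egoView m i ω).1, (egoView m i ω).2 j) :=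
    if_neg j.2.symm
  rw [dhat, card_ne_node, Fintype.sum_eq_add_sum_subtype_ne _ i, hself, zero_add]
  simp only [hother]

lemma measurePreserving_egoView (m : Fin M) (i : Fin (n m)) :
    MeasurePreserving (egoView m i) (Pmodel M n)
      (unif.prod (Measure.pi fun _ => unif.prod unif)) := by
  have hnode : Function.Injective fun j : {j // j ≠ i} => (⟨m, j⟩ : NodeIdx M n) :=
    fun j k hjk => by simpa [Subtype.ext_iff] using hjk
  have hself : (⟨m, i⟩ : NodeIdx M n) ∉ Set.range fun j : {j // j ≠ i} => ⟨m, j⟩ := by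
    rintro ⟨j, hj⟩
    exact j.2 (by simpa using hj)
  have hdyad : Function.Injective
      fun j : {j // j ≠ i} => (⟨m, (min i j, max i j)⟩ : DyadIdx M n) := by
    intro j k hjk
    simp only [Sigma.mk.injEq, heq_eq_eq, Prod.mk.injEq, true_and] at hjk
    grind
  have hsplit := (measurePreserving_eval_prodMk_comp (fun _ => unif) hnode hself).prod
    (measurePreserving_pi_comp_injective (fun _ => unif) hdyad)
  have hpair := (measurePreserving_arrowProdEquivProdArrow ℝ ℝ {j // j ≠ i}
    (fun _ => unif) (fun _ => unif)).symm
  exact (((MeasurePreserving.id unif).prod hpair).comp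
    (measurePreserving_prodAssoc _ _ _)).comp hsplit

lemma measurePreserving_latent :
    MeasurePreserving Prod.fst (Pmodel M n) (Measure.pi fun _ => unif) := by
  unfold Pmodel; exact measurePreserving_fst

lemma ae_latent_mem_Icc : ∀ᵐ ω ∂Pmodel M n, ∀ p, ω.1 p ∈ Set.Icc (0 : ℝ) 1 :=
  Filter.eventually_all.2 fun p => ((measurePreserving_eval (fun _ => unif) p).comp
    measurePreserving_latent).quasiMeasurePreserving.ae ae_unif_mem_Icc

theorem Pmodel_abs_dhat_sub_gdeg_ge_le (hW : Measurable (Function.uncurry W))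
    (hW01 : ∀ u ∈ Set.Icc (0 : ℝ) 1, ∀ v ∈ Set.Icc (0 : ℝ) 1, W u v ∈ Set.Icc (0 : ℝ) 1)
    (m : Fin M) (i : Fin (n m)) (hδ : 0 ≤ δ) :
    Pmodel M n {ω | δ ≤ |dhat W m i ω - gdeg W (Upos m i ω)|} ≤
      ENNReal.ofReal (2 * Real.exp (-(2 * (n m - 1) * δ ^ 2))) := by
  have hoeffding := prod_pi_abs_average_sub_integral_ge_le (ι := {j // j ≠ i}) (μ := unif)
    (ν := unif.prod unif) (measurable_thresholdEdge hW) thresholdEdge_mem_Icc hδ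
  simp only [card_ne_node, sub_zero, one_pow, div_one] at hoeffding
  refine le_trans (measure_mono_ae ?_) ((Measure.le_map_apply
    (measurePreserving_egoView m i).measurable.aemeasurable _).trans
    ((measurePreserving_egoView m i).map_eq ▸ hoeffding))
  filter_upwards [ae_latent_mem_Icc] with ω hω
  intro (h : δ ≤ |dhat W m i ω - gdeg W (Upos m i ω)|)
  have hu : Upos m i ω ∈ Set.Icc (0 : ℝ) 1 := hω ⟨m, i⟩
  rwa [dhat_eq_average_thresholdEdge, card_ne_node,
    ← integral_thresholdEdge hW (hW01 _ hu)] at h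

end Degrees

section Consistency

variable {W : ℝ → ℝ → ℝ} {τ : Type*} {l : Filter τ} {δ η : ℝ}

lemma card_nodeIdx : Fintype.card (NodeIdx M n) = Ntot M n := by simp [NodeIdx, Ntot]

lemma card_filter_graphSize_lt_le (k₀ : ℕ) :
    (Finset.univ.filter fun p : NodeIdx M n => n p.1 < k₀).card ≤ M * k₀ := by
  have hsigma : (Finset.univ.filter fun p : NodeIdx M n => n p.1 < k₀) =
      (Finset.univ.filter fun m => n m < k₀).sigma fun _ => Finset.univ := by ext; simp
  rw [hsigma, Finset.card_sigma]
  calc ∑ m ∈ Finset.univ.filter (fun m => n m < k₀), (Finset.univ : Finset (Fin (n m))).card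
      ≤ (Finset.univ.filter fun m => n m < k₀).card • k₀ :=
        Finset.sum_le_card_nsmul _ _ _ fun m hm => by simpa using (Finset.mem_filter.1 hm).2.le
    _ ≤ M * k₀ := Nat.mul_le_mul_right _ ((Finset.card_le_univ _).trans_eq (Fintype.card_fin M))

lemma Uhat_eq_empiricalCDF_sub (m : Fin M) (i : Fin (n m)) (ω : Sample M n) :
    Uhat W m i ω = empiricalCDF (fun p : NodeIdx M n => dhat W p.1 p.2 ω) (dhat W m i ω) -
      1 / (2 * Ntot M n) := by
  rw [Uhat, rhat, empiricalCDF, card_nodeIdx]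

theorem eventually_Pmodel_exists_abs_dhat_sub_gdeg_ge_le
    (hW : Measurable (Function.uncurry W))
    (hW01 : ∀ u ∈ Set.Icc (0 : ℝ) 1, ∀ v ∈ Set.Icc (0 : ℝ) 1, W u v ∈ Set.Icc (0 : ℝ) 1)
    (hδ : 0 < δ) {θ : ENNReal} (hθ : 0 < θ) :
    ∀ᶠ k₀ : ℕ in Filter.atTop, ∀ n : Fin M → ℕ,
      Pmodel M n {ω | ∃ p : NodeIdx M n, k₀ ≤ n p.1 ∧
        δ ≤ |dhat W p.1 p.2 ω - gdeg W (Upos p.1 p.2 ω)|} ≤ θ := by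
  have htail := Filter.eventually_forall_ge_atTop.2 (ENNReal.tendsto_nhds_zero.1
    (tendsto_natCast_mul_ofReal_exp_neg (c := 2 * δ ^ 2) (by positivity)) (θ / M)
    (ENNReal.div_pos hθ.ne' (ENNReal.natCast_ne_top M)))
  filter_upwards [htail] with k₀ hk₀ n
  have hgraph (m : Fin M) : Pmodel M n {ω | ∃ i : Fin (n m), k₀ ≤ n m ∧
      δ ≤ |dhat W m i ω - gdeg W (Upos m i ω)|} ≤ θ / M := by
    by_cases hm : k₀ ≤ n m
    · simp only [hm, true_and, Set.ofPred_exists]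
      calc _ ≤ ∑ i, Pmodel M n {ω | δ ≤ |dhat W m i ω - gdeg W (Upos m i ω)|} :=
            measure_iUnion_fintype_le _ _
        _ ≤ Fintype.card (Fin (n m)) •
              ENNReal.ofReal (2 * Real.exp (-(2 * (n m - 1) * δ ^ 2))) :=
            Finset.sum_le_card_nsmul _ _ _ fun i _ =>
              Pmodel_abs_dhat_sub_gdeg_ge_le hW hW01 m i hδ.le
        _ ≤ θ / M := by
            rw [Fintype.card_fin, nsmul_eq_mul, mul_right_comm]
            exact hk₀ _ hm
    · simp [hm]
  simp only [Sigma.exists, Set.ofPred_exists] at hgraph ⊢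
  calc _ ≤ ∑ m, Pmodel M n (⋃ i : Fin (n m), {ω | k₀ ≤ n m ∧
        δ ≤ |dhat W m i ω - gdeg W (Upos m i ω)|}) := measure_iUnion_fintype_le _ _
    _ ≤ Fintype.card (Fin M) • (θ / M) := Finset.sum_le_card_nsmul _ _ _ fun m _ => hgraph m
    _ ≤ θ := by
        rw [Fintype.card_fin, nsmul_eq_mul]
        exact ENNReal.mul_div_le

theorem tendsto_Pmodel_exists_abs_empiricalCDF_latent_sub_ge {n : τ → Fin M → ℕ}
    (hN : Filter.Tendsto (fun t => Ntot M (n t)) l Filter.atTop) (hη : 0 < η) :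
    Filter.Tendsto (fun t => Pmodel M (n t)
      {ω | ∃ y ∈ Set.Icc (0 : ℝ) 1, η ≤ |empiricalCDF ω.1 y - y|}) l (nhds 0) := by
  obtain ⟨K, hK⟩ := exists_nat_one_div_lt (half_pos hη)
  have hexp := (tendsto_exp_neg_mul_natCast (c := 2 * (η / 2) ^ 2) (by positivity)).const_mul 2
  rw [mul_zero] at hexp
  have htail := ENNReal.Tendsto.const_mul (a := ((K + 1 : ℕ) + 1 : ENNReal))
    (ENNReal.ofReal_zero ▸ ENNReal.tendsto_ofReal hexp) (Or.inr (by finiteness))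
  rw [mul_zero] at htail
  refine tendsto_of_tendsto_of_tendsto_of_le_of_le tendsto_const_nhds (htail.comp hN)
    (fun _ => zero_le) fun t => ?_
  calc _ ≤ Pmodel M (n t) (Prod.fst ⁻¹' {x | ∃ y ∈ Set.Icc (0 : ℝ) 1,
        η / 2 + 1 / (K + 1 : ℕ) ≤ |empiricalCDF x y - y|}) := by
        refine measure_mono fun ω ⟨y, hy, h⟩ => ⟨y, hy, le_trans ?_ h⟩
        push_cast
        linarith
    _ ≤ (Measure.pi fun _ => unif) {x | ∃ y ∈ Set.Icc (0 : ℝ) 1,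
        η / 2 + 1 / (K + 1 : ℕ) ≤ |empiricalCDF x y - y|} := by
        rw [← measurePreserving_latent.map_eq]
        exact Measure.le_map_apply measurable_fst.aemeasurable _
    _ ≤ _ := by
        refine (pi_unif_exists_abs_empiricalCDF_sub_ge_le (half_pos hη).le K.succ_pos).trans_eq ?_
        rw [card_nodeIdx, mul_right_comm]
        rfl

theorem abs_Uhat_sub_Upos_lt {γ : ℝ} {k₀ : ℕ} {ω : Sample M n}
    (hsep : ∀ x ∈ Set.Icc (0 : ℝ) 1, ∀ y ∈ Set.Icc (0 : ℝ) 1,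
      x + η ≤ y → gdeg W x + γ ≤ gdeg W y)
    (hlatent : ∀ p, ω.1 p ∈ Set.Icc (0 : ℝ) 1)
    (hdeg : ∀ p : NodeIdx M n, k₀ ≤ n p.1 →
      |dhat W p.1 p.2 ω - gdeg W (Upos p.1 p.2 ω)| < γ / 2)
    (hcdf : ∀ y ∈ Set.Icc (0 : ℝ) 1, |empiricalCDF ω.1 y - y| < η)
    (hsmall : (M * k₀ : ℝ) / Ntot M n ≤ η) (hhalf : 1 / (2 * (Ntot M n : ℝ)) < η)
    {m : Fin M} (hm : k₀ ≤ n m) (i : Fin (n m)) :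
    |Uhat W m i ω - Upos m i ω| < 4 * η := by
  have hexceptional : ((Finset.univ.filter fun p : NodeIdx M n => n p.1 < k₀).card : ℝ) /
      Fintype.card (NodeIdx M n) ≤ η := by
    rw [card_nodeIdx]
    refine le_trans ?_ hsmall
    gcongr
    exact_mod_cast card_filter_graphSize_lt_le k₀
  have hrank := abs_empiricalCDF_apply_self_sub_lt (d := fun p : NodeIdx M n => dhat W p.1 p.2 ω)
    (i := ⟨m, i⟩) hlatent hexceptional hcdf (fun p hp q hq hpq => by
      have hp := abs_lt.1 (hdeg p (by simpa using hp))
      have hq := abs_lt.1 (hdeg q (by simpa using hq))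
      have hpq : gdeg W (Upos p.1 p.2 ω) + γ ≤ gdeg W (Upos q.1 q.2 ω) :=
        hsep _ (hlatent p) _ (hlatent q) hpq
      linarith) (by simpa using hm)
  have hnonneg : 0 ≤ 1 / (2 * (Ntot M n : ℝ)) := by positivity
  rw [Uhat_eq_empiricalCDF_sub]
  change |_ - _ - ω.1 ⟨m, i⟩| < _
  rw [abs_lt] at hrank ⊢
  constructor <;> linarith

lemma tendsto_Ntot {n : τ → Fin M → ℕ} {mstar : Fin M}
    (hgrow : Filter.Tendsto (fun t => n t mstar) l Filter.atTop) :
    Filter.Tendsto (fun t => Ntot M (n t)) l Filter.atTop :=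
  Filter.tendsto_atTop_mono
    (fun t => Finset.single_le_sum (f := n t) (fun _ _ => Nat.zero_le _) (Finset.mem_univ mstar))
    hgrow

theorem jgs_latent_uniform_consistency_one_graph_general
    (hWmeas : Measurable (Function.uncurry W))
    (hWrange : ∀ u ∈ Set.Icc (0 : ℝ) 1, ∀ v ∈ Set.Icc (0 : ℝ) 1, W u v ∈ Set.Icc (0 : ℝ) 1)
    (hmono : StrictMonoOn (gdeg W) (Set.Icc 0 1)) {n : τ → Fin M → ℕ} {mstar : Fin M}
    (hgrow : Filter.Tendsto (fun t => n t mstar) l Filter.atTop) :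
    ∀ ε > (0 : ℝ), Filter.Tendsto
      (fun t => Pmodel M (n t)
        {ω | ∃ i : Fin (n t mstar), ε ≤ |Uhat W mstar i ω - Upos mstar i ω|}) l (nhds 0) := by
  refine fun ε hε => ENNReal.tendsto_nhds_zero.2 fun θ hθ => ?_
  have hη : 0 < ε / 4 := by positivity
  have hN := tendsto_Ntot hgrow
  have hNreal := tendsto_natCast_atTop_atTop (R := ℝ).comp hN
  obtain ⟨γ, hγ, hsep⟩ := exists_pos_add_le_of_strictMonoOn hmono hη
  obtain ⟨k₀, hdeg⟩ := (eventually_Pmodel_exists_abs_dhat_sub_gdeg_ge_le (M := M) hWmeas hWrange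
    (half_pos hγ) (ENNReal.half_pos hθ.ne')).exists
  filter_upwards [hgrow.eventually_ge_atTop k₀,
    (hNreal.const_div_atTop (M * k₀ : ℝ)).eventually_le_const hη,
    ((hNreal.const_mul_atTop two_pos).const_div_atTop 1).eventually_lt_const hη,
    ENNReal.tendsto_nhds_zero.1 (tendsto_Pmodel_exists_abs_empiricalCDF_latent_sub_ge hN hη)
      (θ / 2) (ENNReal.half_pos hθ.ne')] with t hm hsmall hhalf hcdf
  refine le_trans (measure_mono_ae ?_) ((measure_union_le _ _).trans
    ((add_le_add (hdeg (n t)) hcdf).trans_eq (ENNReal.add_halves θ)))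
  filter_upwards [ae_latent_mem_Icc] with ω hlatent
  rintro ⟨i, hi⟩
  by_contra hgood
  obtain ⟨hω, hω'⟩ := not_or.1 hgood
  simp only [Set.mem_ofPred_eq, not_exists, not_and, not_le] at hω hω'
  linarith [abs_Uhat_sub_Upos_lt hsep hlatent hω hω' hsmall hhalf hm i]

end Consistency

/-- **Corollary (i) (Uniform consistency when one graph size diverges).**
Fix the number of graphs `M` and consider a sequence (indexed by `t`) of collections of
graphs sampled from the same graphon `W`, whose normalized degree function `g` is
strictly increasing and satisfies `L₁|x-y| ≤ |g(x)-g(y)|` on `[0,1]`. If there is a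
network index `m⋆` with `n_t^{(m⋆)} → ∞`, then
`max_{i ∈ ⟦n^{(m⋆)}⟧} |Û^{JGS}_{i,(m⋆)} - U_{i,(m⋆)}| → 0` in probability, i.e. for
every `ε > 0` the probability that some node of graph `m⋆` has latent position error at
least `ε` tends to `0`. -/
theorem jgs_latent_uniform_consistency_one_graph
    (M : ℕ) (W : ℝ → ℝ → ℝ)
    (hWmeas : Measurable (Function.uncurry W))
    (hWsym : ∀ u v, W u v = W v u)
    (hWrange : ∀ u ∈ Set.Icc (0:ℝ) 1, ∀ v ∈ Set.Icc (0:ℝ) 1, W u v ∈ Set.Icc (0:ℝ) 1)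
    (L₁ : ℝ) (hL₁ : 0 < L₁)
    (hmono : StrictMonoOn (gdeg W) (Set.Icc (0:ℝ) 1))
    (hlip : ∀ x ∈ Set.Icc (0:ℝ) 1, ∀ y ∈ Set.Icc (0:ℝ) 1,
      L₁ * |x - y| ≤ |gdeg W x - gdeg W y|)
    (n : ℕ → Fin M → ℕ) (mstar : Fin M)
    (hgrow : Filter.Tendsto (fun t => n t mstar) Filter.atTop Filter.atTop) :
    ∀ ε > (0:ℝ),
      Filter.Tendsto
        (fun t => Pmodel M (n t)
          {ω | ∃ i : Fin (n t mstar), ε ≤ |Uhat W mstar i ω - Upos mstar i ω|})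
        Filter.atTop (nhds 0) := by
  exact jgs_latent_uniform_consistency_one_graph_general hWmeas hWrange hmono hgrow

end
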